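/- arXiv:1406.1846 — 3 statements merged into one kernel-verified Lean document; each statement's English description precedes it below -/
import Mathlib

section
/- Let n be a natural number and m a real number. For every smooth function U : ℝⁿ × ℝ → ℝ and every point (x, y) of the open upper half-space H = {(x, y) : y > 0}, one has the exact intertwining identity Δ_m( y^{-1}·∂U/∂y )(x, y) = y^{-1}·∂/∂y ( Δ_{m−2} U )(x, y). (This is the flat-model, exact case of the commutation identity L_{2,φ}^m ∘ (ρ^{-1}∂_ρ) ≅ (ρ^{-1}∂_ρ) ∘ L_{2,φ}^{m−2} used in the proof that the weighted GJMS operators factor through iterated weighted Laplacians.) -/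
/-!
Write `V = y⁻¹ f` with `f = ∂U/∂y`. The Leibniz rule gives
`∂_v² V = y⁻¹ ∂_v² f - 2 v_y y⁻² ∂_v f + 2 v_y² y⁻³ f` (`secondDirDeriv_inv_mul`), so the horizontal
second derivatives pass through `y⁻¹`, and the vertical one produces the extra terms
`-2 y⁻² ∂_y f + 2 y⁻³ f`. Since `y⁻¹ ∂_y (y⁻¹ f) = y⁻² ∂_y f - y⁻³ f`, these extra terms are
exactly what lowers the weight from `m` to `m - 2`. Directional derivatives of a smooth function
commute (`fderiv_fderiv_comm`), hence `∂_y` commutes with the Euclidean Laplacian, and the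
identity follows by algebra.
-/

/-- The upper half-space model `ℝⁿ × ℝ`. -/
abbrev UHS (n : ℕ) := EuclideanSpace ℝ (Fin n) × ℝ

/-- The vertical unit vector `(0, 1)`. -/
noncomputable def eY (n : ℕ) : UHS n := (0, 1)

/-- Second directional derivative of `U` along `v` at `p`. -/
noncomputable def secondDirDeriv {n : ℕ} (v : UHS n) (U : UHS n → ℝ) (p : UHS n) : ℝ :=
  fderiv ℝ (fun q => fderiv ℝ U q v) p v

/-- The Euclidean Laplacian of `ℝⁿ × ℝ`: the sum of all second pure partial derivatives. -/
noncomputable def euclLap {n : ℕ} (U : UHS n → ℝ) (p : UHS n) : ℝ :=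
  (∑ i : Fin n, secondDirDeriv (EuclideanSpace.single i 1, 0) U p) +
    secondDirDeriv (eY n) U p

/-- The partial derivative `∂U/∂y` in the last coordinate. -/
noncomputable def dY {n : ℕ} (U : UHS n → ℝ) (p : UHS n) : ℝ := fderiv ℝ U p (eY n)

/-- The weighted Laplacian `Δ_a U = ΔU + a·y⁻¹·∂U/∂y`. -/
noncomputable def wLap {n : ℕ} (a : ℝ) (U : UHS n → ℝ) (p : UHS n) : ℝ :=
  euclLap U p + a * (p.2)⁻¹ * dY U p

theorem contDiff_fderiv_dir {n : ℕ} {U : UHS n → ℝ} (hU : ContDiff ℝ (⊤ : ℕ∞) U) (v : UHS n) :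
    ContDiff ℝ (⊤ : ℕ∞) (fun q => fderiv ℝ U q v) :=
  (hU.fderiv_right (m := (⊤ : ℕ∞)) (by simp)).clm_apply contDiff_const

/-- Symmetry of second derivatives, in terms of iterated directional derivatives. -/
theorem fderiv_fderiv_comm {n : ℕ} {U : UHS n → ℝ} (hU : ContDiff ℝ (⊤ : ℕ∞) U)
    (v w p : UHS n) :
    fderiv ℝ (fun q => fderiv ℝ U q v) p w = fderiv ℝ (fun q => fderiv ℝ U q w) p v := by
  have hd : DifferentiableAt ℝ (fderiv ℝ U) p :=
    (hU.fderiv_right (m := (⊤ : ℕ∞)) (by simp)).differentiable (by simp) p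
  have key : ∀ a b : UHS n,
      fderiv ℝ (fun q => fderiv ℝ U q a) p b = fderiv ℝ (fderiv ℝ U) p b a := by
    intro a b
    rw [fderiv_clm_apply hd (differentiableAt_const a)]
    simp
  rw [key, key]
  exact (hU.contDiffAt.isSymmSndFDerivAt (by
    rw [minSmoothness_of_isRCLikeNormedField]
    exact WithTop.coe_le_coe.mpr (le_top (a := (2 : ℕ∞))))) w v

theorem differentiableAt_inv_mul {n : ℕ} {f : UHS n → ℝ} {p : UHS n} (hp : p.2 ≠ 0)
    (hf : DifferentiableAt ℝ f p) : DifferentiableAt ℝ (fun q : UHS n => (q.2)⁻¹ * f q) p :=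
  (differentiableAt_snd.inv hp).mul hf

/-- Leibniz rule for the directional derivative of `y⁻¹ f` off `{y = 0}`. -/
theorem fderiv_inv_mul {n : ℕ} {f : UHS n → ℝ} {p : UHS n} (hp : p.2 ≠ 0)
    (hf : DifferentiableAt ℝ f p) (v : UHS n) :
    fderiv ℝ (fun q : UHS n => (q.2)⁻¹ * f q) p v
      = (p.2)⁻¹ * (fderiv ℝ f p v - v.2 * ((p.2)⁻¹ * f p)) := by
  have hi : HasFDerivAt (fun q : UHS n => (q.2)⁻¹)
      ((-(p.2 ^ 2)⁻¹) • ContinuousLinearMap.snd ℝ (EuclideanSpace ℝ (Fin n)) ℝ) p :=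
    (hasDerivAt_inv hp).comp_hasFDerivAt p hasFDerivAt_snd
  rw [(hi.fun_mul hf.hasFDerivAt).fderiv]
  simp
  ring

theorem secondDirDeriv_inv_mul {n : ℕ} {f : UHS n → ℝ} (hf : ContDiff ℝ (⊤ : ℕ∞) f)
    {p : UHS n} (hp : p.2 ≠ 0) (v : UHS n) :
    secondDirDeriv v (fun q : UHS n => (q.2)⁻¹ * f q) p
      = (p.2)⁻¹ * secondDirDeriv v f p - 2 * v.2 * (p.2)⁻¹ ^ 2 * fderiv ℝ f p v
        + 2 * v.2 ^ 2 * (p.2)⁻¹ ^ 3 * f p := by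
  have hfd : Differentiable ℝ f := hf.differentiable (by simp)
  have hgd : Differentiable ℝ (fun q => fderiv ℝ f q v) :=
    (contDiff_fderiv_dir hf v).differentiable (by simp)
  -- The first-order formula is only available off `{y = 0}`, which is enough near `p`.
  have hev : (fun q => fderiv ℝ (fun q : UHS n => (q.2)⁻¹ * f q) q v) =ᶠ[nhds p]
      fun q => (q.2)⁻¹ * (fderiv ℝ f q v - v.2 * ((q.2)⁻¹ * f q)) := by
    filter_upwards [continuous_snd.continuousAt.eventually_ne hp] with q hq
    exact fderiv_inv_mul hq (hfd q) v
  have hd := differentiableAt_inv_mul hp (hfd p)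
  unfold secondDirDeriv
  rw [hev.fderiv_eq, fderiv_inv_mul hp ((hgd p).fun_sub (hd.const_mul v.2)),
    fderiv_fun_sub (hgd p) (hd.const_mul v.2), fderiv_const_mul hd]
  simp only [sub_apply, smul_apply, smul_eq_mul, fderiv_inv_mul hp (hfd p)]
  ring

theorem contDiff_secondDirDeriv {n : ℕ} {U : UHS n → ℝ} (hU : ContDiff ℝ (⊤ : ℕ∞) U)
    (v : UHS n) : ContDiff ℝ (⊤ : ℕ∞) (secondDirDeriv v U) :=
  contDiff_fderiv_dir (contDiff_fderiv_dir hU v) v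

theorem fderiv_secondDirDeriv {n : ℕ} {U : UHS n → ℝ} (hU : ContDiff ℝ (⊤ : ℕ∞) U)
    (v w p : UHS n) :
    fderiv ℝ (secondDirDeriv v U) p w = secondDirDeriv v (fun q => fderiv ℝ U q w) p := by
  have h := fderiv_fderiv_comm (contDiff_fderiv_dir hU v) v w p
  simp only [fderiv_fderiv_comm hU v w] at h
  exact h

theorem dY_euclLap {n : ℕ} {U : UHS n → ℝ} (hU : ContDiff ℝ (⊤ : ℕ∞) U) (p : UHS n) :
    DifferentiableAt ℝ (euclLap U) p ∧ dY (euclLap U) p = euclLap (dY U) p := by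
  have hd : ∀ v : UHS n, DifferentiableAt ℝ (secondDirDeriv v U) p := fun v =>
    (contDiff_secondDirDeriv hU v).differentiable (by simp) p
  have h : HasFDerivAt (euclLap U) ((∑ i : Fin n,
      fderiv ℝ (secondDirDeriv (EuclideanSpace.single i 1, 0) U) p) +
      fderiv ℝ (secondDirDeriv (eY n) U) p) p :=
    (HasFDerivAt.fun_sum fun i _ => (hd _).hasFDerivAt).add (hd _).hasFDerivAt
  refine ⟨h.differentiableAt, ?_⟩
  unfold dY
  rw [h.fderiv]
  simp [fderiv_secondDirDeriv hU, euclLap]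

/-- The flat-model, exact case of the commutation identity
`L_{2,φ}^m ∘ (ρ⁻¹∂_ρ) ≅ (ρ⁻¹∂_ρ) ∘ L_{2,φ}^{m−2}`:
`Δ_m( y⁻¹·∂U/∂y ) = y⁻¹·∂/∂y ( Δ_{m−2} U )` on the upper half-space. -/
theorem wLap_comm_inv_dY (n : ℕ) (m : ℝ) (U : UHS n → ℝ) (hU : ContDiff ℝ (⊤ : ℕ∞) U)
    (p : UHS n) (hp : 0 < p.2) :
    wLap m (fun q => (q.2)⁻¹ * dY U q) p = (p.2)⁻¹ * dY (wLap (m - 2) U) p := by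
  have hp' := hp.ne'
  have hf : ContDiff ℝ (⊤ : ℕ∞) (dY U) := contDiff_fderiv_dir hU (eY n)
  have hfd : DifferentiableAt ℝ (dY U) p := hf.differentiable (by simp) p
  have hd := differentiableAt_inv_mul hp' hfd
  obtain ⟨hL, hL'⟩ := dY_euclLap hU p
  have e2 : (eY n).2 = 1 := rfl
  have hR : dY (wLap (m - 2) U) p
      = euclLap (dY U) p + (m - 2) * dY (fun q => (q.2)⁻¹ * dY U q) p := by
    have hw : wLap (m - 2) U
        = fun q => euclLap U q + (m - 2) * ((q.2)⁻¹ * dY U q) := by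
      funext q
      simp only [wLap, mul_assoc]
    rw [← hL', hw]
    unfold dY at hd ⊢
    rw [fderiv_fun_add hL (hd.const_mul _), fderiv_const_mul hd]
    simp
  have hV : dY (fun q => (q.2)⁻¹ * dY U q) p
      = (p.2)⁻¹ * (dY (dY U) p - (p.2)⁻¹ * dY U p) := by
    rw [dY, fderiv_inv_mul hp' hfd, e2, one_mul]
    rfl
  have hE : euclLap (fun q => (q.2)⁻¹ * dY U q) p
      = (p.2)⁻¹ * euclLap (dY U) p - 2 * (p.2)⁻¹ ^ 2 * dY (dY U) p
        + 2 * (p.2)⁻¹ ^ 3 * dY U p := by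
    have hy : fderiv ℝ (dY U) p (eY n) = dY (dY U) p := rfl
    simp only [euclLap, secondDirDeriv_inv_mul hf hp', e2, hy]
    simp [← Finset.mul_sum]
    ring
  rw [hR, wLap, hE, hV]
  ring
end

section
/- Let n be a natural number, m a real number and k ≥ 1 a natural number. For every smooth function U : ℝⁿ × ℝ → ℝ, at every point of the open upper half-space H = {(x, y) : y > 0}, the k-th iterate of the weighted Laplacian Δ_m applied to U equals the composition Δ_{m+2k−2} ∘ Δ_{m+2k−6} ∘ ⋯ ∘ Δ_{m−2k+2} applied to U; that is, Δ_m^k U = (∏_{j=1}^{k} Δ_{m−2k+4j−2}) U, where the factor with j = 1 (parameter m−2k+2) is applied first and the factor with j = k (parameter m+2k−2) is applied last. (This is the flat-model case of the factorization of the weighted GJMS operator of order 2k of a Poincaré–Einstein compactification into a composition of weighted conformal Laplacians, L_{2k,φ}^m = ∏_{j=1}^{k} L_{2,φ}^{m−2k+4j−2}.) -/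
/-- Composition of the operators `f 1, f 2, …, f k`, with `f 1` applied first. -/
noncomputable def compSeq {n : ℕ} (f : ℕ → (UHS n → ℝ) → (UHS n → ℝ)) :
    ℕ → (UHS n → ℝ) → (UHS n → ℝ)
  | 0, U => U
  | k + 1, U => f (k + 1) (compSeq f k U)

open Set Filter Topology
open scoped ContDiff

namespace WLapFactor

/-- The open upper half-space. -/
def Hs (n : ℕ) : Set (UHS n) := {p | 0 < p.2}

/-- Directional derivative along a fixed vector. -/
noncomputable def D {n : ℕ} (v : UHS n) (U : UHS n → ℝ) (p : UHS n) : ℝ := fderiv ℝ U p v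

/-- The operator `B = y⁻¹ ∂_y`. -/
noncomputable def bOp {n : ℕ} (U : UHS n → ℝ) (p : UHS n) : ℝ := (p.2)⁻¹ * D (eY n) U p

/-- Smoothness on the open upper half-space. -/
def Sm {n : ℕ} (U : UHS n → ℝ) : Prop := ContDiffOn ℝ ∞ U (Hs n)

variable {n : ℕ} {U V : UHS n → ℝ}

lemma isOpen_Hs : IsOpen (Hs n) := isOpen_lt continuous_const continuous_snd

lemma Sm.contDiffAt (hU : Sm U) {p : UHS n} (hp : p ∈ Hs n) : ContDiffAt ℝ ∞ U p :=
  ContDiffOn.contDiffAt hU (isOpen_Hs.mem_nhds hp)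

lemma Sm.diff (hU : Sm U) {p : UHS n} (hp : p ∈ Hs n) : DifferentiableAt ℝ U p :=
  (hU.contDiffAt hp).differentiableAt (by simp)

lemma Sm.D (hU : Sm U) (v : UHS n) : Sm (D v U) :=
  (ContDiffOn.fderiv_of_isOpen hU isOpen_Hs (m := ∞) (by simp)).clm_apply contDiffOn_const

lemma Sm.add (hU : Sm U) (hV : Sm V) : Sm (fun p => U p + V p) := ContDiffOn.add hU hV

lemma Sm.mul (hU : Sm U) (hV : Sm V) : Sm (fun p => U p * V p) := ContDiffOn.mul hU hV

lemma sm_const (c : ℝ) : Sm (fun _ : UHS n => c) := contDiffOn_const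

lemma sm_inv : Sm (fun p : UHS n => (p.2)⁻¹) :=
  contDiff_snd.contDiffOn.inv fun _ hp => (ne_of_gt hp)

lemma D_congr (v : UHS n) (h : EqOn U V (Hs n)) : EqOn (D v U) (D v V) (Hs n) := by
  intro p hp
  have : U =ᶠ[𝓝 p] V := h.eventuallyEq_of_mem (isOpen_Hs.mem_nhds hp)
  simp only [D, this.fderiv_eq]

lemma D_add (v : UHS n) (hU : Sm U) (hV : Sm V) :
    EqOn (D v (fun p => U p + V p)) (fun p => D v U p + D v V p) (Hs n) := by
  intro p hp
  simp only [D]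
  rw [fderiv_fun_add (hU.diff hp) (hV.diff hp)]
  simp

lemma D_mul (v : UHS n) (hU : Sm U) (hV : Sm V) :
    EqOn (D v (fun p => U p * V p)) (fun p => D v U p * V p + U p * D v V p) (Hs n) := by
  intro p hp
  simp only [D]
  rw [fderiv_fun_mul (hU.diff hp) (hV.diff hp)]
  simp
  ring

lemma D_const (v : UHS n) (c : ℝ) : D v (fun _ => c) = fun _ => 0 := by
  funext p; simp [D]

lemma D_const_mul (v : UHS n) (c : ℝ) (hU : Sm U) :
    EqOn (D v (fun p => c * U p)) (fun p => c * D v U p) (Hs n) := by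
  intro p hp
  rw [D_mul v (sm_const c) hU hp, D_const]
  simp

lemma D_inv (v : UHS n) :
    EqOn (D v (fun p : UHS n => (p.2)⁻¹)) (fun p => -v.2 * ((p.2)⁻¹ * (p.2)⁻¹)) (Hs n) := by
  intro p hp
  have h1 : HasFDerivAt (fun q : UHS n => q.2) (ContinuousLinearMap.snd ℝ _ ℝ) p :=
    hasFDerivAt_snd
  have h2 := (hasDerivAt_inv (ne_of_gt hp : p.2 ≠ 0)).comp_hasFDerivAt p h1
  have h3 : fderiv ℝ (fun q : UHS n => (q.2)⁻¹) p = _ := h2.fderiv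
  simp only [D, h3]
  simp
  ring

/-- Symmetry of second derivatives on the half-space. -/
lemma D_comm (v w : UHS n) (hU : Sm U) : EqOn (D v (D w U)) (D w (D v U)) (Hs n) := by
  intro p hp
  have hc := hU.contDiffAt hp
  have hs : IsSymmSndFDerivAt ℝ U p :=
    hc.isSymmSndFDerivAt (by
      simp only [minSmoothness_of_isRCLikeNormedField]
      exact WithTop.coe_le_coe.2 (le_top : (2 : ℕ∞) ≤ ⊤))
  have hd : DifferentiableAt ℝ (fderiv ℝ U) p :=
    (hc.fderiv_right (m := ∞) (by simp)).differentiableAt (by simp)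
  have key (a b : UHS n) : D a (D b U) p = fderiv ℝ (fderiv ℝ U) p a b := by
    have : D b U = fun q => fderiv ℝ U q b := rfl
    rw [this]
    simp only [D]
    rw [fderiv_clm_apply hd (differentiableAt_const b)]
    simp
  rw [key, key]
  exact hs.eq v w

/-- The sum rule for a second derivative. -/
lemma DD_add (v : UHS n) (hU : Sm U) (hV : Sm V) {p : UHS n} (hp : p ∈ Hs n) :
    D v (D v (fun p => U p + V p)) p = D v (D v U) p + D v (D v V) p := by
  rw [D_congr v (D_add v hU hV) hp, D_add v (hU.D v) (hV.D v) hp]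

lemma DD_const_mul (v : UHS n) (c : ℝ) (hU : Sm U) {p : UHS n} (hp : p ∈ Hs n) :
    D v (D v (fun p => c * U p)) p = c * D v (D v U) p := by
  rw [D_congr v (D_const_mul v c hU) hp, D_const_mul v c (hU.D v) hp]

/-- The second-order Leibniz rule for the factor `y⁻¹`, whose derivative along `v` is
`-v.2 * y⁻²`; for horizontal `v` only the last term survives. -/
lemma DD_inv_mul (v : UHS n) (hU : Sm U) {p : UHS n} (hp : p ∈ Hs n) :
    D v (D v (fun p => (p.2)⁻¹ * U p)) p =
      2 * v.2 ^ 2 * (p.2)⁻¹ ^ 3 * U p - 2 * v.2 * (p.2)⁻¹ ^ 2 * D v U p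
        + (p.2)⁻¹ * D v (D v U) p := by
  have h1 : EqOn (D v (fun p => (p.2)⁻¹ * U p))
      (fun p => (-v.2 * ((p.2)⁻¹ * (p.2)⁻¹)) * U p + (p.2)⁻¹ * D v U p) (Hs n) := by
    intro q hq
    rw [D_mul v sm_inv hU hq]
    simp only
    rw [D_inv v hq]
  have hgg : Sm (fun p : UHS n => (p.2)⁻¹ * (p.2)⁻¹) := sm_inv.mul sm_inv
  have hg := (sm_const (-v.2)).mul hgg
  rw [D_congr v h1 hp, D_add v (hg.mul hU) (sm_inv.mul (hU.D v)) hp]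
  simp only
  rw [D_mul v hg hU hp, D_mul v sm_inv (hU.D v) hp]
  simp only
  rw [D_const_mul v _ hgg hp]
  simp only
  rw [D_mul v sm_inv sm_inv hp]
  simp only
  rw [D_inv v hp]
  ring

lemma euclLap_eq (U : UHS n → ℝ) (p : UHS n) :
    euclLap U p = (∑ i : Fin n, D (EuclideanSpace.single i 1, 0)
      (D (EuclideanSpace.single i 1, 0) U) p) + D (eY n) (D (eY n) U) p := rfl

lemma wLap_eq (a : ℝ) (U : UHS n → ℝ) : wLap a U = fun p => euclLap U p + a * bOp U p := by
  funext p
  simp only [wLap, bOp, dY, D]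
  ring

lemma Sm.lap (hU : Sm U) : Sm (euclLap U) := by
  rw [show euclLap U = _ from funext (euclLap_eq U)]
  exact Sm.add (ContDiffOn.sum fun i _ => (hU.D _).D _) ((hU.D _).D _)

lemma Sm.bOp (hU : Sm U) : Sm (bOp U) := sm_inv.mul (hU.D _)

lemma Sm.wLap (hU : Sm U) (a : ℝ) : Sm (wLap a U) := by
  rw [wLap_eq]
  exact hU.lap.add ((sm_const a).mul hU.bOp)

lemma Sm.iterate (hU : Sm U) (a : ℝ) (k : ℕ) : Sm ((_root_.wLap a)^[k] U) := by
  induction k with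
  | zero => exact hU
  | succ k ih => rw [Function.iterate_succ_apply']; exact ih.wLap a

/-- `Δ_a` is local: on the open half-space it only sees the values there. -/
lemma wLap_congr (a : ℝ) (h : EqOn U V (Hs n)) : EqOn (wLap a U) (wLap a V) (Hs n) := by
  intro p hp
  have hDD (v : UHS n) : D v (D v U) p = D v (D v V) p := D_congr v (D_congr v h) hp
  simp only [wLap_eq, euclLap_eq, bOp, hDD, D_congr (eY n) h hp]

lemma lap_add_mul (c : ℝ) (hU : Sm U) (hV : Sm V) {p : UHS n} (hp : p ∈ Hs n) :
    euclLap (fun p => U p + c * V p) p = euclLap U p + c * euclLap V p := by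
  have hDD (v : UHS n) : D v (D v (fun p => U p + c * V p)) p
      = D v (D v U) p + c * D v (D v V) p := by
    rw [DD_add v hU ((sm_const c).mul hV) hp, DD_const_mul v c hV hp]
  simp only [euclLap_eq, hDD, Finset.sum_add_distrib, ← Finset.mul_sum]
  ring

lemma bOp_add_mul (c : ℝ) (hU : Sm U) (hV : Sm V) {p : UHS n} (hp : p ∈ Hs n) :
    bOp (fun p => U p + c * V p) p = bOp U p + c * bOp V p := by
  simp only [bOp]
  rw [D_add _ hU ((sm_const c).mul hV) hp]
  simp only
  rw [D_const_mul _ c hV hp]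
  ring

lemma D_sum (v : UHS n) {ι : Type*} (s : Finset ι) (F : ι → UHS n → ℝ) (hF : ∀ i, Sm (F i))
    {p : UHS n} (hp : p ∈ Hs n) :
    D v (fun p => ∑ i ∈ s, F i p) p = ∑ i ∈ s, D v (F i) p := by
  simp only [D]
  rw [fderiv_fun_sum fun i _ => (hF i).diff hp]
  simp

/-- Third derivatives: `∂_v² ∂_w = ∂_w ∂_v²`. -/
lemma DDD_comm (v w : UHS n) (hU : Sm U) {p : UHS n} (hp : p ∈ Hs n) :
    D v (D v (D w U)) p = D w (D v (D v U)) p := by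
  rw [D_congr v (D_comm v w hU) hp, D_comm v w (hU.D v) hp]

/-- The commutation relation `A B = B A - 2 B²`. -/
lemma lap_bOp (hU : Sm U) {p : UHS n} (hp : p ∈ Hs n) :
    euclLap (bOp U) p = bOp (euclLap U) p - 2 * bOp (bOp U) p := by
  have hDD (v : UHS n) : D v (D v (bOp U)) p = 2 * v.2 ^ 2 * (p.2)⁻¹ ^ 3 * D (eY n) U p
      - 2 * v.2 * (p.2)⁻¹ ^ 2 * D v (D (eY n) U) p
        + (p.2)⁻¹ * D (eY n) (D v (D v U)) p := by
    rw [← DDD_comm v _ hU hp]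
    exact DD_inv_mul v (hU.D _) hp
  have hL : D (eY n) (euclLap U) p
      = (∑ i : Fin n, D (eY n) (D (EuclideanSpace.single i 1, 0)
          (D (EuclideanSpace.single i 1, 0) U)) p) + D (eY n) (D (eY n) (D (eY n) U)) p := by
    have hi (i : Fin n) : Sm (D (EuclideanSpace.single i 1, 0)
      (D (EuclideanSpace.single i 1, 0) U)) := (hU.D _).D _
    have hs : Sm (fun p => ∑ i : Fin n, D (EuclideanSpace.single i 1, 0)
      (D (EuclideanSpace.single i 1, 0) U) p) := ContDiffOn.sum fun i _ => hi i
    rw [← D_sum _ _ _ hi hp]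
    exact D_add _ hs ((hU.D _).D _) hp
  have hB : bOp (bOp U) p = (p.2)⁻¹ * (-((p.2)⁻¹ * (p.2)⁻¹) * D (eY n) U p
      + (p.2)⁻¹ * D (eY n) (D (eY n) U) p) := by
    have h1 := D_mul (eY n) sm_inv (hU.D (eY n)) hp
    simp only [D_inv (eY n) hp] at h1
    have h2 : (eY n).2 = 1 := rfl
    rw [h2] at h1
    change (p.2)⁻¹ * D (eY n) (fun p => (p.2)⁻¹ * D (eY n) U p) p = _
    rw [h1]
    ring
  have h2 : (eY n).2 = 1 := rfl
  rw [hB, euclLap_eq]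
  simp only [hDD]
  rw [bOp, hL, h2, mul_add, Finset.mul_sum]
  simp
  ring

lemma wLap_wLap (a b : ℝ) (hU : Sm U) {p : UHS n} (hp : p ∈ Hs n) :
    wLap a (wLap b U) p = euclLap (euclLap U) p + b * euclLap (bOp U) p
      + a * bOp (euclLap U) p + a * b * bOp (bOp U) p := by
  rw [wLap_eq b, wLap_eq a]
  simp only
  rw [lap_add_mul b hU.lap hU.bOp hp, bOp_add_mul b hU.lap hU.bOp hp]
  ring

/-- The exchange rule `Δ_a Δ_b = Δ_{b+2} Δ_{a-2}`. -/
lemma wLap_exchange (a b : ℝ) (hU : Sm U) :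
    EqOn (wLap a (wLap b U)) (wLap (b + 2) (wLap (a - 2) U)) (Hs n) := by
  intro p hp
  rw [wLap_wLap a b hU hp, wLap_wLap _ _ hU hp, lap_bOp hU hp]
  ring

/-- `Δ_m^{k+1} = Δ_{m+2k} Δ_{m-2}^k` on the half-space. -/
lemma wLap_iterate_succ (m : ℝ) (hU : Sm U) (k : ℕ) :
    EqOn ((wLap m)^[k + 1] U) (wLap (m + 2 * k) ((wLap (m - 2))^[k] U)) (Hs n) := by
  induction k with
  | zero => simp [EqOn]
  | succ k ih =>
    intro p hp
    rw [Function.iterate_succ_apply', wLap_congr m ih hp,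
      wLap_exchange _ _ (hU.iterate _ _) hp, Function.iterate_succ_apply']
    congr 1
    push_cast
    ring

lemma iterate_eqOn_compSeq (hU : Sm U) (k : ℕ) (m : ℝ) :
    EqOn ((wLap m)^[k] U)
      (compSeq (fun j => wLap (m - 2 * (k : ℝ) + 4 * (j : ℝ) - 2)) k U) (Hs n) := by
  induction k generalizing m with
  | zero => exact fun _ _ => rfl
  | succ k ih =>
    intro p hp
    -- The first `k` factors for `(m, k + 1)` are the factors for `(m - 2, k)`.
    have hf : (fun j : ℕ => wLap (n := n) (m - 2 * ((k + 1 : ℕ) : ℝ) + 4 * (j : ℝ) - 2))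
        = fun j : ℕ => wLap (m - 2 - 2 * (k : ℝ) + 4 * (j : ℝ) - 2) := by
      funext j
      congr 1
      push_cast
      ring
    rw [wLap_iterate_succ m hU k hp, wLap_congr _ (ih (m - 2)) hp, hf, compSeq]
    congr 1
    push_cast
    ring

end WLapFactor

/-- The flat-model case of the factorization
`L_{2k,φ}^m = ∏_{j=1}^{k} L_{2,φ}^{m−2k+4j−2}`: the `k`-th iterate of `Δ_m` equals the
composition `Δ_{m+2k−2} ∘ Δ_{m+2k−6} ∘ ⋯ ∘ Δ_{m−2k+2}` (factor `j = 1` applied first). -/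
theorem wLap_iterate_factorization (n : ℕ) (m : ℝ) (k : ℕ) (hk : 1 ≤ k)
    (U : UHS n → ℝ) (hU : ContDiff ℝ (⊤ : ℕ∞) U) (p : UHS n) (hp : 0 < p.2) :
    (wLap m)^[k] U p =
      compSeq (fun j => wLap (m - 2 * (k : ℝ) + 4 * (j : ℝ) - 2)) k U p := by
  exact WLapFactor.iterate_eqOn_compSeq hU.contDiffOn k m hp
end

section
/- Let n ≥ 1 be a natural number and m₀ a real number. Let U : ℝ → ℝ be twice continuously differentiable on the open interval (0, 2^{2/n}), and define V : (0,1) → ℝ by V(x) = U((16x)^{1/(2n)}). Then the following are equivalent: (i) for every r ∈ (0, 2^{2/n}), U''(r) + ((16·m₀ − (m₀+2n)·r^{2n})/(r·(16 − r^{2n})))·U'(r) − (n·(m₀+n−1)·r^{2n−2}/(16 − r^{2n}))·U(r) = 0; (ii) for every x ∈ (0,1), x(1−x)·V''(x) + ( (2n+m₀−1)/(2n) − ((m₀+4n−1)/(2n))·x )·V'(x) − ((m₀+n−1)/(4n))·V(x) = 0. (This is the change of variables 16x = r^{2n} reducing the radial weighted conformal Laplacian equation on the doubled warped-product Poincaré–Einstein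 manifold over a Ricci flat fiber to the standard hypergeometric ODE with parameters a = (n−2γ)/(2n), b = 1/2, c = (n−γ)/n when m₀ = 1−2γ.) -/
/-!
The substitution `r = (16 x) ^ (1 / (2 n))` is a bijection of `(0, 1)` onto `(0, 2 ^ (2 / n))`, and
`dr/dx = r / (2 n x)`. The chain rule then gives
`V' = U' r / (2 n x)` and `V'' = U'' r² / (4 n² x²) + U' (1 - 2 n) r / (4 n² x²)`, so the left-hand
side of the hypergeometric equation at `x` is `r² (1 - x) / (4 n² x)` times the left-hand side of
the radial equation at `r`. This factor does not vanish, so the equations are equivalent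
point by point.
-/

/-- The radius `r` determined by `16 x = r ^ (2 n)`. -/
noncomputable def radius (n : ℕ) (x : ℝ) : ℝ := (16 * x) ^ ((1 : ℝ) / (2 * (n : ℝ)))

lemma radius_pos (n : ℕ) {x : ℝ} (hx : 0 < x) : 0 < radius n x := by
  unfold radius; positivity

lemma radius_pow {n : ℕ} (hn : 1 ≤ n) {x : ℝ} (hx : 0 < x) : radius n x ^ (2 * n) = 16 * x := by
  have hn0 : (n : ℝ) ≠ 0 := by positivity
  unfold radius
  rw [← Real.rpow_natCast, ← Real.rpow_mul (by positivity)]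
  push_cast
  rw [one_div_mul_cancel (by positivity), Real.rpow_one]

lemma endpoint_pow {n : ℕ} (hn : 1 ≤ n) : ((2 : ℝ) ^ ((2 : ℝ) / (n : ℝ))) ^ (2 * n) = 16 := by
  have hn0 : (n : ℝ) ≠ 0 := by positivity
  rw [← Real.rpow_natCast, ← Real.rpow_mul (by positivity)]
  push_cast
  rw [show (2 : ℝ) / n * (2 * n) = (4 : ℕ) by field_simp; norm_num, Real.rpow_natCast]
  norm_num

lemma radius_mem {n : ℕ} (hn : 1 ≤ n) {x : ℝ} (hx : x ∈ Set.Ioo (0 : ℝ) 1) :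
    radius n x ∈ Set.Ioo 0 ((2 : ℝ) ^ ((2 : ℝ) / (n : ℝ))) := by
  refine ⟨radius_pos n hx.1, lt_of_pow_lt_pow_left₀ (2 * n) (by positivity) ?_⟩
  rw [radius_pow hn hx.1, endpoint_pow hn]
  linarith [hx.2]

lemma exists_radius_eq {n : ℕ} (hn : 1 ≤ n) {r : ℝ}
    (hr : r ∈ Set.Ioo 0 ((2 : ℝ) ^ ((2 : ℝ) / (n : ℝ)))) :
    ∃ x ∈ Set.Ioo (0 : ℝ) 1, radius n x = r := by
  have hr0 := hr.1
  have hx : 0 < r ^ (2 * n) / 16 := by positivity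
  refine ⟨r ^ (2 * n) / 16, ⟨hx, ?_⟩, ?_⟩
  · have h := pow_lt_pow_left₀ hr.2 hr0.le (by omega : 2 * n ≠ 0)
    rw [endpoint_pow hn] at h
    linarith
  · refine (pow_left_inj₀ (radius_pos n hx).le hr0.le (by omega : 2 * n ≠ 0)).1 ?_
    rw [radius_pow hn hx]
    ring

lemma hasDerivAt_radius (n : ℕ) {x : ℝ} (hx : 0 < x) :
    HasDerivAt (radius n) (radius n x / (2 * n * x)) x := by
  have h := ((hasDerivAt_id x).const_mul 16).rpow_const
    (p := (1 : ℝ) / (2 * (n : ℝ))) (Or.inl (by simpa using hx.ne'))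
  refine h.congr_deriv ?_
  have h16 : 16 * x ≠ 0 := by positivity
  simp only [id, radius]
  rw [Real.rpow_sub_one h16]
  field_simp


/-- The change of variables `16x = r^{2n}` reduces the radial weighted conformal Laplacian
ODE on `(0, 2^{2/n})` to the standard hypergeometric ODE on `(0,1)`. -/
theorem radial_ode_iff_hypergeometric (n : ℕ) (hn : 1 ≤ n) (m₀ : ℝ) (U V : ℝ → ℝ)
    (hU : ContDiffOn ℝ 2 U (Set.Ioo 0 ((2 : ℝ) ^ ((2 : ℝ) / (n : ℝ)))))
    (hV : ∀ x : ℝ, V x = U ((16 * x) ^ ((1 : ℝ) / (2 * (n : ℝ))))) :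
    (∀ r ∈ Set.Ioo (0 : ℝ) ((2 : ℝ) ^ ((2 : ℝ) / (n : ℝ))),
        deriv (deriv U) r
          + (16 * m₀ - (m₀ + 2 * (n : ℝ)) * r ^ (2 * n)) / (r * (16 - r ^ (2 * n)))
            * deriv U r
          - (n : ℝ) * (m₀ + (n : ℝ) - 1) * r ^ (2 * n - 2) / (16 - r ^ (2 * n)) * U r = 0)
      ↔
    (∀ x ∈ Set.Ioo (0 : ℝ) 1,
        x * (1 - x) * deriv (deriv V) x
          + ((2 * (n : ℝ) + m₀ - 1) / (2 * (n : ℝ))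
              - (m₀ + 4 * (n : ℝ) - 1) / (2 * (n : ℝ)) * x) * deriv V x
          - (m₀ + (n : ℝ) - 1) / (4 * (n : ℝ)) * V x = 0) := by
  set I : Set ℝ := Set.Ioo 0 ((2 : ℝ) ^ ((2 : ℝ) / (n : ℝ))) with hI
  have hIo : IsOpen I := isOpen_Ioo
  obtain rfl : V = fun x => U (radius n x) := funext hV
  have hn0 : (n : ℝ) ≠ 0 := by positivity
  have hU1 : ∀ r ∈ I, HasDerivAt U (deriv U r) r := fun r hr =>
    ((hU.differentiableOn (by norm_num)).differentiableAt (hIo.mem_nhds hr)).hasDerivAt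
  have hU2 : ∀ r ∈ I, HasDerivAt (deriv U) (deriv (deriv U) r) r := fun r hr =>
    (((hU.deriv_of_isOpen (m := 1) hIo (by norm_num)).differentiableOn
      (by norm_num)).differentiableAt (hIo.mem_nhds hr)).hasDerivAt
  have hV1 : ∀ x ∈ Set.Ioo (0 : ℝ) 1, deriv (fun x => U (radius n x)) x
      = deriv U (radius n x) * (radius n x / (2 * n * x)) := fun x hx =>
    ((hU1 _ (radius_mem hn hx)).comp x (hasDerivAt_radius n hx.1)).deriv
  have hV2 : ∀ x ∈ Set.Ioo (0 : ℝ) 1, deriv (deriv (fun x => U (radius n x))) x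
      = deriv (deriv U) (radius n x) * (radius n x / (2 * n * x)) ^ 2
        + deriv U (radius n x) * ((1 - 2 * n) * radius n x / (2 * n * x) ^ 2) := by
    intro x hx
    have hx0 : x ≠ 0 := hx.1.ne'
    rw [(Filter.eventuallyEq_of_mem (isOpen_Ioo.mem_nhds hx) hV1).deriv_eq]
    have h1 := (hU2 _ (radius_mem hn hx)).comp x (hasDerivAt_radius n hx.1)
    have h2 := (hasDerivAt_radius n hx.1).div ((hasDerivAt_id x).const_mul (2 * (n : ℝ)))
      (by simp [hn0, hx0])
    refine ((h1.mul h2).congr_deriv ?_).deriv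
    simp only [id, Function.comp_apply, Pi.div_apply]
    field_simp
  have key : ∀ x ∈ Set.Ioo (0 : ℝ) 1,
      x * (1 - x) * deriv (deriv (fun x => U (radius n x))) x
          + ((2 * (n : ℝ) + m₀ - 1) / (2 * (n : ℝ))
              - (m₀ + 4 * (n : ℝ) - 1) / (2 * (n : ℝ)) * x) * deriv (fun x => U (radius n x)) x
          - (m₀ + (n : ℝ) - 1) / (4 * (n : ℝ)) * U (radius n x)
        = radius n x ^ 2 * (1 - x) / (4 * n ^ 2 * x) *
        (deriv (deriv U) (radius n x)
          + (16 * m₀ - (m₀ + 2 * (n : ℝ)) * radius n x ^ (2 * n))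
              / (radius n x * (16 - radius n x ^ (2 * n))) * deriv U (radius n x)
          - (n : ℝ) * (m₀ + (n : ℝ) - 1) * radius n x ^ (2 * n - 2)
              / (16 - radius n x ^ (2 * n)) * U (radius n x)) := by
    intro x hx
    have hx0 : x ≠ 0 := hx.1.ne'
    have hx1 : 1 - x ≠ 0 := by linarith [hx.2]
    have hr0 : radius n x ≠ 0 := (radius_pos n hx.1).ne'
    -- The truncated exponent `2 * n - 2` is harmless because `1 ≤ n`.
    have hp : radius n x ^ (2 * n - 2) = 16 * x / radius n x ^ 2 := by
      rw [eq_div_iff (by positivity), ← pow_add, Nat.sub_add_cancel (by omega), radius_pow hn hx.1]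
    rw [hV1 x hx, hV2 x hx, hp, radius_pow hn hx.1, show 16 - 16 * x = 16 * (1 - x) by ring]
    field_simp
    ring
  constructor
  · intro h x hx
    exact (key x hx).trans (by rw [h _ (radius_mem hn hx), mul_zero])
  · intro h r hr
    obtain ⟨x, hx, rfl⟩ := exists_radius_eq hn hr
    have hne : radius n x ^ 2 * (1 - x) / (4 * n ^ 2 * x) ≠ 0 := by
      have := radius_pos n hx.1
      have := hx.1
      have : 0 < 1 - x := by linarith [hx.2]
      positivity
    exact (mul_eq_zero.1 ((key x hx).symm.trans (h x hx))).resolve_left hne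
end
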